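/- Let (Ω, ℱ, ℙ) be a probability space, r > 0, and let ζ : Ω → 𝒞_r be Borel measurable with E(‖ζ‖_{𝒞_r}²) < ∞. For s ∈ [−r, 0] and i ∈ ℤ, let 𝓛_{ζ(s)_i} ∈ P₂(ℝ) denote the law of the real random variable ω ↦ ζ(ω)(s)_i. Then for every s ∈ [−r, 0] the sequence (𝓛_{ζ(s)_i})_{i∈ℤ} belongs to 𝓛², and the map s ↦ (𝓛_{ζ(s)_i})_{i∈ℤ} is continuous from [−r, 0] into the metric space (𝓛², ρ). -/

import Mathlib

/-!
For two real random variables `X`, `Y` on the same probability space, the joint law of `(X, Y)` is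
a coupling of their laws, so `W₂(𝓛_X, 𝓛_Y)² ≤ E|X - Y|²` (`ofReal_W2_sq_le`). Applying this to the
coordinates of two `ℓ²`-valued random variables `U`, `V` and exchanging sum and expectation
(Tonelli) gives `∑ᵢ W₂(𝓛_{Uᵢ}, 𝓛_{Vᵢ})² ≤ E‖U - V‖²` (`tsum_ofReal_W2_sq_le`).

With `U = ζ(s)` and `V = 0` the right-hand side is at most `E‖ζ‖² < ∞`, which gives membership in
`𝓛²`. With `U = ζ(s')` and `V = ζ(s)` it tends to `0` as `s' → s` by dominated convergence: each
path is continuous, and the integrand is dominated by `(2‖ζ‖)²` (`tendsto_lintegral_increment`).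
-/

open MeasureTheory ENNReal

noncomputable section

/-- Borel probability measures on `ℝ` with finite second moment. -/
def P2 : Set (Measure ℝ) :=
  {μ | IsProbabilityMeasure μ ∧ (∫⁻ x, ENNReal.ofReal (x ^ 2) ∂μ) < ⊤}

/-- `π` is a coupling of `μ` and `ν`. -/
def IsCoupling (π : Measure (ℝ × ℝ)) (μ ν : Measure ℝ) : Prop :=
  π.map Prod.fst = μ ∧ π.map Prod.snd = ν

/-- The 2-Wasserstein distance (as an extended nonnegative real). -/
def W2e (μ ν : Measure ℝ) : ℝ≥0∞ :=
  ⨅ (π : Measure (ℝ × ℝ)) (_ : IsProbabilityMeasure π) (_ : IsCoupling π μ ν),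
    (∫⁻ p, ENNReal.ofReal ((p.1 - p.2) ^ 2) ∂π) ^ (1/2 : ℝ)

/-- The 2-Wasserstein distance. -/
def W2 (μ ν : Measure ℝ) : ℝ := (W2e μ ν).toReal

/-- The space `ℓ²` of square-summable real sequences indexed by `ℤ`. -/
abbrev l2Z := lp (fun _ : ℤ => ℝ) 2

/-- The Banach space `𝒞_r = C([-r, 0], ℓ²)` with the supremum norm. -/
abbrev Cseg (r : ℝ) := C(Set.Icc (-r) (0 : ℝ), l2Z)

/-- The joint law of `(X, Y)` is an admissible coupling in the infimum defining `W₂`. -/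
lemma ofReal_W2_sq_le {Ω : Type*} [MeasurableSpace Ω] (P : Measure Ω) [IsProbabilityMeasure P]
    {X Y : Ω → ℝ} (hX : Measurable X) (hY : Measurable Y) :
    ENNReal.ofReal ((W2 (P.map X) (P.map Y)) ^ 2)
      ≤ ∫⁻ ω, ENNReal.ofReal ((X ω - Y ω) ^ 2) ∂P := by
  have hXY : Measurable (fun ω => (X ω, Y ω)) := hX.prodMk hY
  have hW : W2e (P.map X) (P.map Y)
      ≤ (∫⁻ ω, ENNReal.ofReal ((X ω - Y ω) ^ 2) ∂P) ^ (1 / 2 : ℝ) := by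
    refine (iInf_le _ (P.map fun ω => (X ω, Y ω))).trans ?_
    refine (iInf_le _ (Measure.isProbabilityMeasure_map hXY.aemeasurable)).trans ?_
    refine (iInf_le _ ⟨?_, ?_⟩).trans ?_
    · rw [lintegral_map (by fun_prop) hXY]
    · rw [Measure.map_map measurable_fst hXY]; rfl
    · rw [Measure.map_map measurable_snd hXY]; rfl
  calc ENNReal.ofReal ((W2 (P.map X) (P.map Y)) ^ 2)
      = ENNReal.ofReal (W2e (P.map X) (P.map Y)).toReal ^ 2 :=
        ENNReal.ofReal_pow ENNReal.toReal_nonneg 2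
    _ ≤ (W2e (P.map X) (P.map Y)) ^ 2 := by gcongr; exact ENNReal.ofReal_toReal_le
    _ ≤ ((∫⁻ ω, ENNReal.ofReal ((X ω - Y ω) ^ 2) ∂P) ^ (1 / 2 : ℝ)) ^ 2 := by gcongr
    _ = ∫⁻ ω, ENNReal.ofReal ((X ω - Y ω) ^ 2) ∂P := by
        rw [← ENNReal.rpow_natCast, ← ENNReal.rpow_mul]; norm_num

lemma tsum_ofReal_sq_eq (u : l2Z) :
    ∑' i : ℤ, ENNReal.ofReal ((u i) ^ 2) = ENNReal.ofReal (‖u‖ ^ 2) := by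
  have h : HasSum (fun i : ℤ => (u i) ^ 2) (‖u‖ ^ 2) := by
    simpa using lp.hasSum_norm (p := 2) (by norm_num) u
  rw [← h.tsum_eq, ENNReal.ofReal_tsum_of_nonneg (fun i => sq_nonneg _) h.summable]

/-- `ρ(𝓛_U, 𝓛_V)² ≤ E‖U - V‖²` for random sequences in `ℓ²` with measurable coordinates. -/
lemma tsum_ofReal_W2_sq_le {Ω : Type*} [MeasurableSpace Ω] (P : Measure Ω)
    [IsProbabilityMeasure P] {U V : Ω → l2Z}
    (hU : ∀ i, Measurable fun ω => U ω i) (hV : ∀ i, Measurable fun ω => V ω i) :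
    ∑' i : ℤ, ENNReal.ofReal ((W2 (P.map fun ω => U ω i) (P.map fun ω => V ω i)) ^ 2)
      ≤ ∫⁻ ω, ENNReal.ofReal (‖U ω - V ω‖ ^ 2) ∂P := by
  calc _ ≤ ∑' i : ℤ, ∫⁻ ω, ENNReal.ofReal ((U ω i - V ω i) ^ 2) ∂P :=
        ENNReal.tsum_le_tsum fun i => ofReal_W2_sq_le P (hU i) (hV i)
    _ = ∫⁻ ω, ∑' i : ℤ, ENNReal.ofReal ((U ω i - V ω i) ^ 2) ∂P :=
        (lintegral_tsum fun i =>
          (((hU i).sub (hV i)).pow_const 2).ennreal_ofReal.aemeasurable).symm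
    _ = _ := by
        refine lintegral_congr fun ω => ?_
        rw [← tsum_ofReal_sq_eq]; rfl

lemma summable_of_tsum_ofReal_ne_top {f : ℤ → ℝ} (hf : ∀ i, 0 ≤ f i)
    (h : ∑' i, ENNReal.ofReal (f i) ≠ ⊤) : Summable f := by
  simpa [ENNReal.toReal_ofReal (hf _)] using ENNReal.summable_toReal h

lemma continuous_coord (i : ℤ) : Continuous fun u : l2Z => u i :=
  (lp.evalCLM ℝ (fun _ : ℤ => ℝ) 2 i).continuous

lemma tendsto_lintegral_increment {Ω : Type*} [MeasurableSpace Ω] (P : Measure Ω) (r : ℝ)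
    [MeasurableSpace (Cseg r)] [BorelSpace (Cseg r)]
    (ζ : Ω → Cseg r) (hζ : Measurable ζ)
    (hint : Integrable (fun ω => ‖ζ ω‖ ^ 2) P) (s : Set.Icc (-r) (0 : ℝ)) :
    Filter.Tendsto (fun s' => ∫⁻ ω, ENNReal.ofReal (‖ζ ω s' - ζ ω s‖ ^ 2) ∂P) (nhds s)
      (nhds 0) := by
  have hbound : ∫⁻ ω, ENNReal.ofReal ((2 * ‖ζ ω‖) ^ 2) ∂P ≠ ⊤ := by
    have h4 : Integrable (fun ω => (2 * ‖ζ ω‖) ^ 2) P := by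
      simpa [mul_pow] using hint.const_mul (2 ^ 2)
    exact h4.lintegral_lt_top.ne
  have key := tendsto_lintegral_filter_of_dominated_convergence (μ := P) (l := nhds s)
    (F := fun s' ω => ENNReal.ofReal (‖ζ ω s' - ζ ω s‖ ^ 2)) (f := fun _ => 0)
    (fun ω => ENNReal.ofReal ((2 * ‖ζ ω‖) ^ 2)) ?_ ?_ hbound ?_
  · simpa using key
  · refine Filter.Eventually.of_forall fun s' => ?_
    have hc : Continuous fun x : Cseg r => ‖x s' - x s‖ ^ 2 := by fun_prop
    exact (hc.measurable.comp hζ).ennreal_ofReal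
  · refine Filter.Eventually.of_forall fun s' => Filter.Eventually.of_forall fun ω => ?_
    gcongr
    linarith [norm_sub_le (ζ ω s') (ζ ω s), (ζ ω).norm_coe_le_norm s', (ζ ω).norm_coe_le_norm s]
  · refine Filter.Eventually.of_forall fun ω => ?_
    have hc : Continuous fun s' => ENNReal.ofReal (‖ζ ω s' - ζ ω s‖ ^ 2) :=
      ENNReal.continuous_ofReal.comp (by fun_prop)
    simpa using hc.tendsto s

/-- If `ζ : Ω → 𝒞_r` is Borel measurable with `E‖ζ‖² < ∞`, then for each
`s ∈ [-r, 0]` the sequence of laws `(𝓛_{ζ(s)_i})_{i∈ℤ}` belongs to `𝓛²`, and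
`s ↦ (𝓛_{ζ(s)_i})_{i∈ℤ}` is continuous from `[-r, 0]` into `(𝓛², ρ)`. -/
theorem law_segment_mem_Lsq_and_continuous
    {Ω : Type*} [MeasurableSpace Ω] (P : Measure Ω) [IsProbabilityMeasure P]
    (r : ℝ) (hr : 0 < r)
    [MeasurableSpace (Cseg r)] [BorelSpace (Cseg r)]
    (ζ : Ω → Cseg r) (hζ : Measurable ζ)
    (hint : Integrable (fun ω => ‖ζ ω‖ ^ 2) P) :
    (∀ s : Set.Icc (-r) (0 : ℝ),
      (∀ i : ℤ, P.map (fun ω => ζ ω s i) ∈ P2) ∧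
      Summable (fun i : ℤ =>
        (W2 (P.map fun ω => ζ ω s i) (Measure.dirac 0)) ^ 2)) ∧
    ∀ s : Set.Icc (-r) (0 : ℝ), ∀ ε > (0 : ℝ), ∃ δ > (0 : ℝ),
      ∀ s' : Set.Icc (-r) (0 : ℝ), dist s' s < δ →
        Real.sqrt (∑' i : ℤ,
          (W2 (P.map fun ω => ζ ω s' i) (P.map fun ω => ζ ω s i)) ^ 2) < ε := by
  have hmeas : ∀ s i, Measurable fun ω => ζ ω s i := fun s i =>
    ((continuous_coord i).comp (continuous_eval_const s)).measurable.comp hζ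
  have hfin : ∀ s, ∫⁻ ω, ENNReal.ofReal (‖ζ ω s‖ ^ 2) ∂P < ⊤ := fun s => by
    refine lt_of_le_of_lt (lintegral_mono fun ω => ?_) hint.lintegral_lt_top
    gcongr
    exact (ζ ω).norm_coe_le_norm s
  refine ⟨fun s => ⟨fun i => ⟨Measure.isProbabilityMeasure_map (hmeas s i).aemeasurable, ?_⟩, ?_⟩,
    fun s ε hε => ?_⟩
  · rw [lintegral_map (by fun_prop) (hmeas s i)]
    refine lt_of_le_of_lt (lintegral_mono fun ω => ?_) (hfin s)
    dsimp only
    rw [← tsum_ofReal_sq_eq]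
    exact ENNReal.le_tsum i
  · refine summable_of_tsum_ofReal_ne_top (fun i => sq_nonneg _) ?_
    -- `δ₀` is the law of each coordinate of the zero random sequence.
    have h := tsum_ofReal_W2_sq_le P (U := fun ω => ζ ω s) (V := fun _ => 0) (hmeas s)
      (fun i => measurable_const)
    simp only [lp.coeFn_zero, Pi.zero_apply, Measure.map_const, measure_univ, one_smul,
      sub_zero] at h
    exact (h.trans_lt (hfin s)).ne
  · have hev := (tendsto_lintegral_increment P r ζ hζ hint s).eventually_lt_const
      (ENNReal.ofReal_pos.2 (pow_pos hε 2))
    obtain ⟨δ, hδ, H⟩ := Metric.eventually_nhds_iff.1 hev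
    refine ⟨δ, hδ, fun s' hs' => ?_⟩
    have h := (tsum_ofReal_W2_sq_le P (hmeas s') (hmeas s)).trans_lt (H hs')
    have hsum := summable_of_tsum_ofReal_ne_top (fun i => sq_nonneg _) (h.trans_le le_top).ne
    rw [← ENNReal.ofReal_tsum_of_nonneg (fun i => sq_nonneg _) hsum,
      ENNReal.ofReal_lt_ofReal_iff (pow_pos hε 2)] at h
    exact (Real.sqrt_lt' hε).2 h

end
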